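/- Let ι be a finite index type, d ∈ ℕ, let (ρ_a)_{a∈ι} be a family of positive semidefinite d×d complex matrices, let ρ be the block-diagonal matrix on ι × Fin d with a-th diagonal block ρ_a, and set σ_E := Σ_{a∈ι} ρ_a. Let t ∈ (0,1]. Then for every complex matrix Z indexed by ι × Fin d with blocks Z_{(a,b)}, the (real) quantity Re Tr[ρ(Z+Z^†)] + (1−t)·Tr[ρ Z^†Z] + t·Tr[(I_ι ⊗ σ_E) Z Z^†] is at least Σ_{a∈ι} ( Re Tr[ρ_a (Z_{(a,a)} + Z_{(a,a)}^†)] + (1−t)·Tr[ρ_a Z_{(a,a)}^† Z_{(a,a)}] + t·Tr[σ_E Z_{(a,a)} Z_{(a,a)}^†] ). In particular, in the infimum of this objective over all Z one may restrict to block-diagonal Z = Σ_a |a⟩⟨a| ⊗ Z_a without increasing the value. -/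

import Mathlib

open Matrix ComplexOrder

theorem aux_trace {ι : Type*} [Fintype ι] [DecidableEq ι] {d : ℕ}
    (R : ι → Matrix (Fin d) (Fin d) ℂ) (W : Matrix (ι × Fin d) (ι × Fin d) ℂ) :
    ((Matrix.of fun pq rs : ι × Fin d =>
      if pq.1 = rs.1 then R pq.1 pq.2 rs.2 else 0) * W).trace
      = ∑ a, (R a * Matrix.of fun i j : Fin d => W (a, i) (a, j)).trace := by
  simp only [Matrix.trace, Matrix.diag, Matrix.mul_apply, Matrix.of_apply, Fintype.sum_prod_type]
  refine Finset.sum_congr rfl fun a _ => Finset.sum_congr rfl fun i _ => ?_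
  rw [Finset.sum_eq_single a]
  · simp
  · intro b _ hb
    simp [hb.symm]
  · simp

theorem aux_nonneg {d : ℕ} {P : Matrix (Fin d) (Fin d) ℂ} (hP : P.PosSemidef)
    (Y : Matrix (Fin d) (Fin d) ℂ) : 0 ≤ (P * (Yᴴ * Y)).trace.re := by
  have h := (hP.mul_mul_conjTranspose_same Y).trace_nonneg
  rw [← Matrix.mul_assoc, Matrix.trace_mul_comm, ← Matrix.mul_assoc]
  exact (Complex.le_def.mp h).1

theorem aux_sum {ι : Type*} [Fintype ι] {d : ℕ} (P : Matrix (Fin d) (Fin d) ℂ)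
    (hP : P.PosSemidef) (Y : ι → Matrix (Fin d) (Fin d) ℂ) (a : ι) :
    (P * ((Y a)ᴴ * Y a)).trace.re ≤ (P * ∑ b, (Y b)ᴴ * Y b).trace.re := by
  rw [Finset.mul_sum, Matrix.trace_sum, Complex.re_sum]
  exact Finset.single_le_sum (f := fun b => (P * ((Y b)ᴴ * Y b)).trace.re)
    (fun b _ => aux_nonneg hP (Y b)) (Finset.mem_univ a)

/-- Key step of Proposition 1 in the paper: for a classical-quantum state
`ρ = Σ_a |a⟩⟨a| ⊗ ρ_a` with `σ_E = Σ_a ρ_a` and `t ∈ (0,1]`, the Brown–Fawzi–Fawzi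
objective evaluated at an arbitrary operator `Z` dominates the objective evaluated
at its block-diagonal part, so in the infimum over `Z` one may restrict to
block-diagonal `Z = Σ_a |a⟩⟨a| ⊗ Z_a` without increasing the value. -/
theorem bff_objective_restrict_block_diagonal
    {ι : Type*} [Fintype ι] [DecidableEq ι] (d : ℕ)
    (ρa : ι → Matrix (Fin d) (Fin d) ℂ) (hρa : ∀ a, (ρa a).PosSemidef)
    (ρ : Matrix (ι × Fin d) (ι × Fin d) ℂ)
    (hρ : ρ = Matrix.of fun pq rs : ι × Fin d =>
      if pq.1 = rs.1 then ρa pq.1 pq.2 rs.2 else 0)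
    (σE : Matrix (Fin d) (Fin d) ℂ) (hσE : σE = ∑ a, ρa a)
    (IσE : Matrix (ι × Fin d) (ι × Fin d) ℂ)
    (hIσE : IσE = Matrix.of fun pq rs : ι × Fin d =>
      if pq.1 = rs.1 then σE pq.2 rs.2 else 0)
    (t : ℝ) (ht : t ∈ Set.Ioc (0 : ℝ) 1)
    (Z : Matrix (ι × Fin d) (ι × Fin d) ℂ)
    (Zblk : ι → ι → Matrix (Fin d) (Fin d) ℂ)
    (hZblk : ∀ a b, Zblk a b = Matrix.of fun i j : Fin d => Z (a, i) (b, j)) :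
    ∑ a, ((ρa a * (Zblk a a + (Zblk a a)ᴴ)).trace.re
        + (1 - t) * (ρa a * ((Zblk a a)ᴴ * Zblk a a)).trace.re
        + t * (σE * (Zblk a a * (Zblk a a)ᴴ)).trace.re)
      ≤ (ρ * (Z + Zᴴ)).trace.re
        + (1 - t) * (ρ * (Zᴴ * Z)).trace.re
        + t * (IσE * (Z * Zᴴ)).trace.re := by
  obtain ⟨ht0, ht1⟩ := ht
  have hσ : σE.PosSemidef := by
    rw [hσE]
    exact Matrix.posSemidef_sum _ fun a _ => hρa a
  rw [hρ, hIσE, aux_trace, aux_trace, aux_trace (fun _ => σE), Complex.re_sum, Complex.re_sum,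
    Complex.re_sum, Finset.mul_sum, Finset.mul_sum, ← Finset.sum_add_distrib,
    ← Finset.sum_add_distrib]
  refine Finset.sum_le_sum fun a _ => ?_
  have e1 : (Matrix.of fun i j : Fin d => (Z + Zᴴ) (a, i) (a, j))
      = Zblk a a + (Zblk a a)ᴴ := by
    ext i j
    simp [hZblk]
  have e2 : (Matrix.of fun i j : Fin d => (Zᴴ * Z) (a, i) (a, j))
      = ∑ b, (Zblk b a)ᴴ * Zblk b a := by
    ext i j
    simp [hZblk, Matrix.sum_apply, Matrix.mul_apply, Fintype.sum_prod_type]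
  have e3 : (Matrix.of fun i j : Fin d => (Z * Zᴴ) (a, i) (a, j))
      = ∑ b, ((Zblk a b)ᴴ)ᴴ * (Zblk a b)ᴴ := by
    ext i j
    simp [hZblk, Matrix.sum_apply, Matrix.mul_apply, Fintype.sum_prod_type]
  rw [e1, e2, e3]
  have h2 := aux_sum (ρa a) (hρa a) (fun b => Zblk b a) a
  have h3 := aux_sum σE hσ (fun b => (Zblk a b)ᴴ) a
  simp only [Matrix.conjTranspose_conjTranspose] at h3 ⊢
  have h1t : 0 ≤ 1 - t := by linarith
  gcongr
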